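/- arXiv:math/0310326 — 2 statements merged into one kernel-verified Lean document; each statement's English description precedes it below -/
import Mathlib

section
/- The number of perfect matchings of the 8×8 grid graph, i.e. the number of domino tilings of a standard chessboard, equals 12988816. -/
/-- The m×n grid graph on vertex set Fin m × Fin n: (x,y) ~ (x',y') iff |x-x'|+|y-y'| = 1. -/
def gridGraph (m n : ℕ) : SimpleGraph (Fin m × Fin n) :=
  SimpleGraph.fromRel (fun u v =>
    (u.1 = v.1 ∧ u.2.val + 1 = v.2.val) ∨ (u.2 = v.2 ∧ u.1.val + 1 = v.1.val))

/-- A perfect matching of a graph `G` is a set of edges of `G` covering each vertex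
exactly once. -/
def IsPerfectMatchingSet {V : Type*} (G : SimpleGraph V) (M : Finset (Sym2 V)) : Prop :=
  (∀ e ∈ M, e ∈ G.edgeSet) ∧ ∀ v : V, ∃! e, e ∈ M ∧ v ∈ e

/-- The number of perfect matchings of `G`. -/
noncomputable def numPerfectMatchings {V : Type*} (G : SimpleGraph V) : ℕ :=
  Nat.card {M : Finset (Sym2 V) // IsPerfectMatchingSet G M}

open Classical in
/-- Matchings of `G` covering exactly the vertices of `A`. -/
noncomputable def pmOn {V : Type*} [Fintype V] (G : SimpleGraph V) (A : Finset V) :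
    Finset (Finset (Sym2 V)) :=
  Finset.univ.filter (fun M => (∀ e ∈ M, e ∈ G.edgeSet) ∧ (∀ e ∈ M, ∀ v ∈ e, v ∈ A) ∧
    ∀ v ∈ A, ∃! e, e ∈ M ∧ v ∈ e)

lemma mem_pmOn {V : Type*} [Fintype V] (G : SimpleGraph V) (A : Finset V) (M : Finset (Sym2 V)) :
    M ∈ pmOn G A ↔ (∀ e ∈ M, e ∈ G.edgeSet) ∧ (∀ e ∈ M, ∀ v ∈ e, v ∈ A) ∧
    ∀ v ∈ A, ∃! e, e ∈ M ∧ v ∈ e := by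
  simp [pmOn]

lemma pmOn_univ {V : Type*} [Fintype V] (G : SimpleGraph V) :
    numPerfectMatchings G = (pmOn G Finset.univ).card := by
  classical
  unfold numPerfectMatchings
  rw [Nat.card_eq_fintype_card, Fintype.card_subtype]
  congr 1
  ext M
  rw [mem_pmOn, Finset.mem_filter]
  simp [IsPerfectMatchingSet]

lemma pmOn_empty {V : Type*} [Fintype V] (G : SimpleGraph V) :
    (pmOn G ∅).card = 1 := by
  classical
  rw [Finset.card_eq_one]
  refine ⟨∅, ?_⟩
  ext M
  rw [mem_pmOn, Finset.mem_singleton]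
  constructor
  · rintro ⟨-, h, -⟩
    rw [Finset.eq_empty_iff_forall_notMem]
    intro e he
    induction e with
    | _ a b => exact absurd (h _ he a (by simp)) (by simp)
  · rintro rfl
    simp

open Classical in
lemma pmOn_rec {V : Type*} [Fintype V] (G : SimpleGraph V) (A : Finset V) (v : V) (hv : v ∈ A) :
    (pmOn G A).card = ∑ u ∈ Finset.univ.filter (fun u => G.Adj v u),
      if u ∈ A then (pmOn G ((A.erase v).erase u)).card else 0 := by
  have key : pmOn G A = ((Finset.univ.filter (fun u => G.Adj v u)).filter (· ∈ A)).biUnion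
      (fun u => (pmOn G ((A.erase v).erase u)).image (insert s(v, u))) := by
    ext M
    simp only [Finset.mem_biUnion, Finset.mem_image, Finset.mem_filter, Finset.mem_univ, true_and]
    constructor
    · intro hM
      rw [mem_pmOn] at hM
      obtain ⟨h1, h2, h3⟩ := hM
      obtain ⟨e, ⟨heM, hve⟩, -⟩ := h3 v hv
      obtain ⟨u, rfl⟩ := Sym2.mem_iff_exists.1 hve
      have hadj : G.Adj v u := h1 _ heM
      have huA : u ∈ A := h2 _ heM u (by simp)
      refine ⟨u, ⟨hadj, huA⟩, M.erase s(v, u), ?_, Finset.insert_erase heM⟩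
      rw [mem_pmOn]
      refine ⟨fun e he => h1 e (Finset.mem_of_mem_erase he), ?_, ?_⟩
      · intro e he w hw
        obtain ⟨hne, heM'⟩ := Finset.mem_erase.1 he
        rw [Finset.mem_erase, Finset.mem_erase]
        refine ⟨?_, ?_, h2 e heM' w hw⟩
        · rintro rfl
          exact hne ((h3 w huA).unique ⟨heM', hw⟩ ⟨heM, by simp⟩)
        · rintro rfl
          exact hne ((h3 w hv).unique ⟨heM', hw⟩ ⟨heM, by simp⟩)
      · intro w hw
        rw [Finset.mem_erase, Finset.mem_erase] at hw
        obtain ⟨hwu, hwv, hwA⟩ := hw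
        obtain ⟨e, ⟨he, hwe⟩, huniq⟩ := h3 w hwA
        refine ⟨e, ⟨Finset.mem_erase.2 ⟨?_, he⟩, hwe⟩, ?_⟩
        · rintro rfl
          rcases Sym2.mem_iff.1 hwe with h | h
          · exact hwv h
          · exact hwu h
        · rintro e' ⟨he', hwe'⟩
          exact huniq e' ⟨Finset.mem_of_mem_erase he', hwe'⟩
    · rintro ⟨u, ⟨hadj, huA⟩, N, hN, rfl⟩
      rw [mem_pmOn] at hN ⊢
      obtain ⟨h1, h2, h3⟩ := hN
      refine ⟨?_, ?_, ?_⟩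
      · intro e he
        rcases Finset.mem_insert.1 he with rfl | he
        · exact hadj
        · exact h1 e he
      · intro e he w hw
        rcases Finset.mem_insert.1 he with rfl | he
        · rcases Sym2.mem_iff.1 hw with rfl | rfl
          · exact hv
          · exact huA
        · exact Finset.mem_of_mem_erase (Finset.mem_of_mem_erase (h2 e he w hw))
      · intro w hw
        by_cases hwe : w ∈ s(v, u)
        · refine ⟨s(v, u), ⟨Finset.mem_insert_self _ _, hwe⟩, ?_⟩
          rintro e' ⟨he', hwe'⟩
          rcases Finset.mem_insert.1 he' with rfl | he'
          · rfl
          · exfalso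
            have := h2 e' he' w hwe'
            rw [Finset.mem_erase, Finset.mem_erase] at this
            rcases Sym2.mem_iff.1 hwe with rfl | rfl
            · exact this.2.1 rfl
            · exact this.1 rfl
        · have hwe2 := hwe
          rw [Sym2.mem_iff, not_or] at hwe2
          obtain ⟨e, ⟨he, hwe'⟩, huniq⟩ := h3 w (by simp [hwe2, hw])
          refine ⟨e, ⟨Finset.mem_insert_of_mem he, hwe'⟩, ?_⟩
          rintro e' ⟨he', hwe''⟩
          rcases Finset.mem_insert.1 he' with rfl | he'
          · exact absurd hwe'' hwe
          · exact huniq e' ⟨he', hwe''⟩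
  have hnot : ∀ u, ∀ N ∈ pmOn G ((A.erase v).erase u), ∀ e ∈ N, v ∉ e := by
    intro u N hN e he hve
    rw [mem_pmOn] at hN
    have := hN.2.1 e he v hve
    simp at this
  rw [key, Finset.card_biUnion, Finset.sum_filter]
  · refine Finset.sum_congr rfl fun u _ => ?_
    split_ifs with hu
    · refine Finset.card_image_of_injOn ?_
      intro N hN N' hN' h
      have a1 : s(v, u) ∉ N := fun h => hnot u N hN _ h (by simp)
      have a2 : s(v, u) ∉ N' := fun h => hnot u N' hN' _ h (by simp)
      rw [← Finset.erase_insert a1, ← Finset.erase_insert a2]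
      exact congrArg (fun X => Finset.erase X s(v, u)) h
    · rfl
  · intro u _ u' _ huu'
    rw [Function.onFun, Finset.disjoint_left]
    intro M hM hM'
    obtain ⟨N, hN, rfl⟩ := Finset.mem_image.1 hM
    obtain ⟨N', hN', h⟩ := Finset.mem_image.1 hM'
    have : s(v, u') ∈ insert s(v, u) N := h ▸ Finset.mem_insert_self _ _
    rcases Finset.mem_insert.1 this with h | h
    · exact huu' (Sym2.congr_right.1 h).symm
    · exact hnot u N hN _ h (by simp)

/-! ### Bitmask encoding of subsets of the board -/

abbrev Cell := Fin 8 × Fin 8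

def idx (v : Cell) : ℕ := 8 * v.1.val + v.2.val

lemma idx_inj {u v : Cell} (h : idx u = idx v) : u = v := by
  unfold idx at h
  ext <;> omega

def cells (S : ℕ) : Finset Cell := Finset.univ.filter (fun v => S.testBit (idx v) = true)

noncomputable def F (S : ℕ) : ℕ := (pmOn (gridGraph 8 8) (cells S)).card

/-- Indices of the neighbours of the cell with index `i`. -/
def nb (i : ℕ) : List ℕ :=
  (bif Nat.beq (i % 8) 7 then [] else [i + 1]) ++ (bif Nat.ble 56 i then [] else [i + 8]) ++
  (bif Nat.beq (i % 8) 0 then [] else [i - 1]) ++ (bif Nat.ble 8 i then [i - 8] else [])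

def adjB (u v : Cell) : Bool :=
  decide ((u.1 = v.1 ∧ u.2.val + 1 = v.2.val) ∨ (u.2 = v.2 ∧ u.1.val + 1 = v.1.val)) ||
  decide ((v.1 = u.1 ∧ v.2.val + 1 = u.2.val) ∨ (v.2 = u.2 ∧ v.1.val + 1 = u.1.val))

lemma adj_iff (u v : Cell) : (gridGraph 8 8).Adj u v ↔ adjB u v = true := by
  simp only [gridGraph, SimpleGraph.fromRel_adj, adjB, Bool.or_eq_true, decide_eq_true_eq]
  constructor
  · exact fun h => h.2
  · refine fun h => ⟨?_, h⟩
    rintro rfl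
    omega

lemma nb_spec : ∀ v : Cell,
    (Finset.univ.filter (fun u => adjB v u = true)).val.map idx = (nb (idx v) : Multiset ℕ) := by
  decide +kernel

lemma sum_nb (v : Cell) (g : ℕ → ℕ) :
    ∑ u ∈ Finset.univ.filter (fun u => adjB v u = true), g (idx u) = ((nb (idx v)).map g).sum := by
  have h := congrArg (fun m => (Multiset.map g m).sum) (nb_spec v)
  simpa [Finset.sum, Multiset.map_map, Function.comp_def] using h

lemma cells_xor (S : ℕ) (v u : Cell) (huv : u ≠ v) (hv : v ∈ cells S) (hu : u ∈ cells S) :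
    cells (S ^^^ 2 ^ idx v ^^^ 2 ^ idx u) = ((cells S).erase v).erase u := by
  ext w
  simp only [cells, Finset.mem_filter, Finset.mem_univ, true_and] at hv hu
  simp only [cells, Finset.mem_filter, Finset.mem_univ, true_and, Finset.mem_erase,
    Nat.testBit_xor, Nat.testBit_two_pow]
  by_cases h1 : w = u
  · subst h1
    have : idx v ≠ idx w := fun h => huv (idx_inj h).symm
    simp [hu, this]
  · by_cases h2 : w = v
    · subst h2
      have : idx u ≠ idx w := fun h => huv (idx_inj h)
      simp [hv, this]
    · have a1 : idx u ≠ idx w := fun h => h1 (idx_inj h).symm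
      have a2 : idx v ≠ idx w := fun h => h2 (idx_inj h).symm
      simp [h1, h2, a1, a2]

/-- The recursion obtained by choosing the partner of a given cell. -/
def Rec (f : ℕ → ℕ) : Prop := ∀ (S : ℕ) (v : Cell), S.testBit (idx v) = true →
    f S = ((nb (idx v)).map
      (fun j => bif S.testBit j then f (S ^^^ 2 ^ idx v ^^^ 2 ^ j) else 0)).sum

lemma F_rec : Rec F := by
  intro S v h
  classical
  have hv : v ∈ cells S := by simpa [cells] using h
  rw [← sum_nb v (fun j => bif S.testBit j then F (S ^^^ 2 ^ idx v ^^^ 2 ^ j) else 0)]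
  unfold F
  rw [pmOn_rec _ _ v hv]
  refine Finset.sum_congr (by ext u; simp [adj_iff]) fun u hu => ?_
  have hadj : (gridGraph 8 8).Adj v u := by
    rw [adj_iff]; simpa using hu
  have hiff : u ∈ cells S ↔ S.testBit (idx u) = true := by simp [cells]
  by_cases hb : S.testBit (idx u) = true
  · rw [if_pos (hiff.2 hb), hb, cond_true, cells_xor S v u hadj.ne' hv (hiff.2 hb)]
    congr!
  · rw [if_neg (fun h => hb (hiff.1 h))]
    simp [hb]

/-! ### The dynamic programme -/

def merge : ℕ → List (ℕ × ℕ) → List (ℕ × ℕ) → List (ℕ × ℕ)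
  | 0, l, m => l ++ m
  | _ + 1, [], m => m
  | _ + 1, a :: l, [] => a :: l
  | n + 1, a :: l, b :: m =>
    bif Nat.beq a.1 b.1 then (a.1, a.2 + b.2) :: merge n l m
    else bif Nat.ble a.1 b.1 then a :: merge n l (b :: m)
    else b :: merge n (a :: l) m

def val (f : ℕ → ℕ) (L : List (ℕ × ℕ)) : ℕ := (L.map (fun p => p.2 * f p.1)).sum

@[simp] lemma val_nil (f : ℕ → ℕ) : val f [] = 0 := rfl
@[simp] lemma val_cons (f : ℕ → ℕ) (p : ℕ × ℕ) (L) : val f (p :: L) = p.2 * f p.1 + val f L := by simp [val]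
@[simp] lemma val_append (f : ℕ → ℕ) (L M) : val f (L ++ M) = val f L + val f M := by simp [val]

lemma val_merge (f : ℕ → ℕ) (n : ℕ) (l m) : val f (merge n l m) = val f l + val f m := by
  induction n generalizing l m with
  | zero => simp [merge]
  | succ n ih =>
    rcases l with _ | ⟨a, l⟩
    · simp [merge]
    rcases m with _ | ⟨b, m⟩
    · simp [merge]
    rw [merge]
    cases h : Nat.beq a.1 b.1
    · cases h' : Nat.ble a.1 b.1
      · simp only [cond_false, val_cons, ih]; ring
      · simp only [cond_false, cond_true, val_cons, ih]; ring
    · have := Nat.eq_of_beq_eq_true h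
      simp only [cond_true, val_cons, ih, this]; ring

/-- States in which cell `i` is already covered. -/
def keep (i : ℕ) : List (ℕ × ℕ) → List (ℕ × ℕ)
  | [] => []
  | p :: L => bif p.1.testBit i then keep i L else p :: keep i L

/-- States obtained by placing a domino on cells `i` and `j`. -/
def place (i j : ℕ) : List (ℕ × ℕ) → List (ℕ × ℕ)
  | [] => []
  | p :: L => bif p.1.testBit i && p.1.testBit j then
      (p.1 ^^^ 2 ^ i ^^^ 2 ^ j, p.2) :: place i j L else place i j L

def step (n : ℕ) (L : List (ℕ × ℕ)) (i : ℕ) : List (ℕ × ℕ) :=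
  (nb i).foldr (fun j acc => merge n (place i j L) acc) (keep i L)

lemma val_foldr (f : ℕ → ℕ) (n i : ℕ) (L) (js : List ℕ) :
    val f (js.foldr (fun j acc => merge n (place i j L) acc) (keep i L)) =
      (js.map (fun j => val f (place i j L))).sum + val f (keep i L) := by
  induction js with
  | nil => simp
  | cons j js ih => simp only [List.foldr_cons, val_merge, ih, List.map_cons, List.sum_cons]; ring

lemma val_step (f : ℕ → ℕ) (hf : Rec f) (n : ℕ) (L) (v : Cell) : val f (step n L (idx v)) = val f L := by
  rw [step, val_foldr]
  induction L with
  | nil => simp [place, keep]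
  | cons p L ih =>
    rw [val_cons, ← ih]
    cases h : p.1.testBit (idx v)
    · simp only [place, keep, h, Bool.false_and, cond_false, val_cons]; ring
    · rw [hf p.1 v h]
      simp only [keep, h, cond_true]
      have : ∀ j, val f (place (idx v) j (p :: L)) =
          p.2 * (bif p.1.testBit j then f (p.1 ^^^ 2 ^ idx v ^^^ 2 ^ j) else 0)
            + val f (place (idx v) j L) := by
        intro j
        cases h' : p.1.testBit j <;> simp [place, h, h']
      simp only [this, List.sum_map_add, List.sum_map_mul_left]
      ring

def run (n k S : ℕ) : List (ℕ × ℕ) := (List.range k).foldl (step n) [(S, 1)]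

lemma run_eq : run 1000 64 18446744073709551615 = [(0, 12988816)] := by
  decide +kernel

lemma val_foldl (f : ℕ → ℕ) (hf : Rec f) (n : ℕ) (is : List ℕ) (h : ∀ i ∈ is, i < 64) (L) : val f (is.foldl (step n) L) = val f L := by
  induction is generalizing L with
  | nil => rfl
  | cons i is ih =>
    rw [List.foldl_cons, ih (fun j hj => h j (by simp [hj]))]
    have hi : i < 64 := h i (by simp)
    have : i = idx (⟨i / 8, by omega⟩, ⟨i % 8, by omega⟩) := by
      simp only [idx]; omega
    rw [this, val_step f hf]

lemma val_run (f : ℕ → ℕ) (hf : Rec f) (n k S : ℕ) (hk : k ≤ 64) : val f (run n k S) = f S := by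
  rw [run, val_foldl f hf n _ (fun i hi => lt_of_lt_of_le (List.mem_range.1 hi) hk)]
  simp

lemma cells_full : cells 18446744073709551615 = Finset.univ := by decide +kernel

lemma cells_zero : cells 0 = ∅ := by simp [cells]

lemma F_zero : F 0 = 1 := by
  rw [F, cells_zero, pmOn_empty]

lemma F_full : numPerfectMatchings (gridGraph 8 8) = F 18446744073709551615 := by
  rw [F, cells_full, pmOn_univ]

lemma val_final (f : ℕ → ℕ) (h : f 0 = 1) : val f [(0, 12988816)] = 12988816 := by
  simp [h]

/-- The number of domino tilings of a chessboard: the 8×8 grid graph has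
exactly 12988816 perfect matchings. -/
theorem numPerfectMatchings_chessboard :
    numPerfectMatchings (gridGraph 8 8) = 12988816 := by
  have h := val_run F F_rec 1000 64 18446744073709551615 le_rfl
  rw [run_eq] at h
  rw [F_full, ← h]
  exact val_final F F_zero
end

section
/- There exists a constant C > 0 such that for all positive integers m, n with mn even, the number N(m,n) of perfect matchings of the m×n grid graph satisfies |log N(m,n) − G·m·n/π| ≤ C·(m+n), where G is Catalan's constant. In other words, the number of domino tilings of an m×n rectangle is exp(Gmn/π + O(m+n)). -/
/-- Catalan's constant G = 1 - 1/3² + 1/5² - 1/7² + ⋯ -/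
noncomputable def catalanConstant : ℝ := ∑' k : ℕ, (-1 : ℝ) ^ k / (2 * k + 1) ^ 2



/-- The crossing sign of two arcs, `-1` if the first arc crosses the second one from the left. -/
def crossSgn (b w b' w' : ℤ) : ℤ :=
  if min b w < min b' w' ∧ min b' w' < max b w ∧ max b w < max b' w' then -1 else 1

lemma sign4 (b w b' w' : ℤ) (h1 : b ≠ w) (h2 : b ≠ b') (h3 : b ≠ w') (h4 : w ≠ b') (h5 : w ≠ w')
    (h6 : b' ≠ w') :
    Int.sign ((b' - b) * (w' - w) * (-1) * ((w' - b) * (w - b'))) =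
      crossSgn b w b' w' * crossSgn b' w' b w := by
  have key : ∀ x y : ℤ, x ≠ y → Int.sign (x - y) = if x < y then -1 else 1 := by
    intro x y h
    split_ifs with h'
    · exact Int.sign_eq_neg_one_of_neg (by omega)
    · exact Int.sign_eq_one_of_pos (by omega)
  rw [Int.sign_mul, Int.sign_mul, Int.sign_mul, Int.sign_mul, key _ _ h2.symm, key _ _ h5.symm, key _ _ h3.symm,
    key _ _ h4]
  unfold crossSgn
  rcases lt_or_gt_of_ne h1 with a1 | a1 <;> rcases lt_or_gt_of_ne h6 with a6 | a6 <;>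
    simp only [min_eq_left a1.le, max_eq_right a1.le, min_eq_right a1.le, max_eq_left a1.le,
      min_eq_left a6.le, max_eq_right a6.le, min_eq_right a6.le, max_eq_left a6.le] <;>
    split_ifs <;> first | rfl | omega

/-- The integer sign as a monoid homomorphism. -/
def intSignHom : ℤ →* ℤ where
  toFun := Int.sign
  map_one' := rfl
  map_mul' := Int.sign_mul

lemma vander_perm {N : ℕ} (σ : Equiv.Perm (Fin N)) (f : Fin N → ℤ) :
    ∏ i, ∏ j ∈ Finset.Ioi i, (f (σ j) - f (σ i)) =
      (Equiv.Perm.sign σ : ℤ) * ∏ i, ∏ j ∈ Finset.Ioi i, (f j - f i) := by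
  have h := Matrix.det_vandermonde (fun i => f (σ i))
  rw [← h, ← Matrix.det_vandermonde]
  exact Matrix.det_permute σ (Matrix.vandermonde f)

lemma sign_eq_cross {N : ℕ} (b w : Fin N → ℤ) (hb : Function.Injective b)
    (hw : Function.Injective w) (hbw : ∀ i j, b i ≠ w j) :
    ∃ ε : ℤ, (ε = 1 ∨ ε = -1) ∧ ∀ σ : Equiv.Perm (Fin N),
      (∏ i, ∏ j ∈ {i}ᶜ, crossSgn (b (σ i)) (w i) (b (σ j)) (w j)) *
        ∏ i, Int.sign (w i - b (σ i)) = (Equiv.Perm.sign σ : ℤ) * ε := by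
  set R : ℤ := (∏ i, ∏ j ∈ Finset.Ioi i, (b j - b i)) * (∏ i, ∏ j ∈ Finset.Ioi i, (w j - w i)) *
    (∏ i : Fin N, ∏ j ∈ Finset.Ioi i, (-1)) * ∏ i, ∏ j, (w j - b i) with hR
  have hR0 : R ≠ 0 := by
    rw [hR]
    refine mul_ne_zero (mul_ne_zero (mul_ne_zero ?_ ?_) ?_) ?_
    · refine Finset.prod_ne_zero_iff.2 fun i _ => Finset.prod_ne_zero_iff.2 fun j hj => ?_
      have : i ≠ j := (Finset.mem_Ioi.1 hj).ne
      exact sub_ne_zero.2 fun h => this (hb h).symm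
    · refine Finset.prod_ne_zero_iff.2 fun i _ => Finset.prod_ne_zero_iff.2 fun j hj => ?_
      have : i ≠ j := (Finset.mem_Ioi.1 hj).ne
      exact sub_ne_zero.2 fun h => this (hw h).symm
    · exact Finset.prod_ne_zero_iff.2 fun i _ => Finset.prod_ne_zero_iff.2 fun j hj => by norm_num
    · refine Finset.prod_ne_zero_iff.2 fun i _ => Finset.prod_ne_zero_iff.2 fun j hj => ?_
      exact sub_ne_zero.2 fun h => hbw _ _ h.symm
  refine ⟨Int.sign R, ?_, fun σ => ?_⟩
  · rcases lt_or_gt_of_ne hR0 with h | h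
    · exact Or.inr (Int.sign_eq_neg_one_of_neg h)
    · exact Or.inl (Int.sign_eq_one_of_pos h)
  have hF : (∏ i, ∏ j ∈ Finset.Ioi i, ((b (σ j) - b (σ i)) * (w j - w i) * (-1) *
      ((w j - b (σ i)) * (w i - b (σ j))))) * ∏ i, (w i - b (σ i)) =
      (Equiv.Perm.sign σ : ℤ) * R := by
    simp only [Finset.prod_mul_distrib (f := fun _ => _ * _)]
    have e1 : (∏ i, ∏ j ∈ Finset.Ioi i, ((w j - b (σ i)) * (w i - b (σ j)))) *
        ∏ i, (w i - b (σ i)) = ∏ i, ∏ j, (w j - b i) := by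
      rw [Finset.prod_prod_Ioi_mul_eq_prod_prod_off_diag (fun i j => w i - b (σ j)), 
        ← Finset.prod_mul_distrib,
        ← Equiv.prod_comp σ (fun i => ∏ j, (w j - b i))]
      refine Finset.prod_congr rfl fun i _ => ?_
      rw [mul_comm, Fintype.prod_eq_mul_prod_compl i]
    simp only [Finset.prod_mul_distrib] at e1 ⊢
    have e2 := vander_perm σ b
    rw [hR, ← e1, e2]
    ring
  have hG := congrArg intSignHom hF
  rw [map_mul, map_mul, map_prod, map_prod] at hG
  simp only [map_prod] at hG
  have hs : intSignHom (Equiv.Perm.sign σ : ℤ) = (Equiv.Perm.sign σ : ℤ) := by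
    rcases Int.units_eq_one_or (Equiv.Perm.sign σ) with h | h <;> rw [h] <;> rfl
  rw [hs] at hG
  change _ = _ * Int.sign R at hG
  rw [← hG]
  congr 1
  rw [← Finset.prod_prod_Ioi_mul_eq_prod_prod_off_diag
    (fun i j => crossSgn (b (σ j)) (w j) (b (σ i)) (w i))]
  refine Finset.prod_congr rfl fun i _ => Finset.prod_congr rfl fun j hj => ?_
  have hij : i ≠ j := (Finset.mem_Ioi.1 hj).ne
  exact (sign4 _ _ _ _ (hbw _ _) (fun h => hij (σ.injective (hb h))) (hbw _ _) (hbw _ _).symm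
    (fun h => hij (hw h)) (hbw _ _)).symm

/-- Row-major position of a cell. -/
def gpos {m n : ℕ} (v : Fin m × Fin n) : ℤ := (v.1.val : ℤ) * n + v.2.val

/-- The column sign of a vertical edge, `1` for horizontal edges. -/
def gkap {m n : ℕ} (u v : Fin m × Fin n) : ℤ := if u.1 = v.1 then 1 else (-1) ^ u.2.val

lemma lex_lt (n y x y' x' : ℤ) (hx : 0 ≤ x) (hxn : x < n) (hx' : 0 ≤ x') (hxn' : x' < n) :
    y * n + x < y' * n + x' ↔ y < y' ∨ (y = y' ∧ x < x') := by
  rcases lt_trichotomy y y' with h | h | h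
  · have : (y + 1) * n ≤ y' * n := mul_le_mul_of_nonneg_right (by omega) (by omega)
    constructor
    · intro _; exact Or.inl h
    · intro _; linarith
  · subst h; constructor
    · intro h; right; exact ⟨rfl, by linarith⟩
    · rintro (h | h)
      · omega
      · linarith [h.2]
  · have : (y' + 1) * n ≤ y * n := mul_le_mul_of_nonneg_right (by omega) (by omega)
    constructor
    · intro _; linarith
    · intro _; omega

lemma crossSgn_swap_left (b w b' w' : ℤ) : crossSgn b w b' w' = crossSgn w b b' w' := by
  unfold crossSgn; rw [min_comm b w, max_comm b w]

lemma crossSgn_swap_right (b w b' w' : ℤ) : crossSgn b w b' w' = crossSgn b w w' b' := by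
  unfold crossSgn; rw [min_comm b' w', max_comm b' w']

/-- Segment sign: cell `(y₀, x₀)` lies on the upper row of the vertical domino, to the left. -/
def segSgn (y x y2 y0 x0 : ℤ) : ℤ := if y ≠ y2 ∧ y0 = max y y2 ∧ x0 < x then -1 else 1

/-- Same-level sign. -/
def levSgn (y y2 y' y2' : ℤ) : ℤ := if y ≠ y2 ∧ y' ≠ y2' ∧ min y y2 = min y' y2' then -1 else 1

lemma pair_sign_aux (n y x y2 x2 y' x' y2' x2' : ℤ)
    (hx : 0 ≤ x) (hxn : x < n) (hx2 : 0 ≤ x2) (hxn2 : x2 < n)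
    (hx' : 0 ≤ x') (hxn' : x' < n) (hx2' : 0 ≤ x2') (hxn2' : x2' < n)
    (h : (y2 = y ∧ x2 = x + 1) ∨ (y2 = y + 1 ∧ x2 = x))
    (h' : (y2' = y' ∧ x2' = x' + 1) ∨ (y2' = y' + 1 ∧ x2' = x'))
    (d1 : ¬ (y = y' ∧ x = x')) (d2 : ¬ (y = y2' ∧ x = x2'))
    (d3 : ¬ (y2 = y' ∧ x2 = x')) (d4 : ¬ (y2 = y2' ∧ x2 = x2')) :
    segSgn y x y2 y' x' * segSgn y x y2 y2' x2' *
      crossSgn (y * n + x) (y2 * n + x2) (y' * n + x') (y2' * n + x2') = levSgn y y2 y' y2' := by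
  have o1 : y * n + x < y2 * n + x2 := (lex_lt _ _ _ _ _ hx hxn hx2 hxn2).2 (by omega)
  have o2 : y' * n + x' < y2' * n + x2' := (lex_lt _ _ _ _ _ hx' hxn' hx2' hxn2').2 (by omega)
  unfold crossSgn
  rw [min_eq_left o1.le, max_eq_right o1.le, min_eq_left o2.le, max_eq_right o2.le]
  simp only [lex_lt _ _ _ _ _ hx hxn hx' hxn', lex_lt _ _ _ _ _ hx' hxn' hx2 hxn2,
    lex_lt _ _ _ _ _ hx2 hxn2 hx2' hxn2']
  unfold segSgn levSgn
  rcases h with ⟨rfl, rfl⟩ | ⟨rfl, rfl⟩ <;> rcases h' with ⟨rfl, rfl⟩ | ⟨rfl, rfl⟩ <;>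
    split_ifs <;> first | rfl | omega

lemma segSgn_swap (y x y2 y0 x0 : ℤ) : segSgn y x y2 y0 x0 = segSgn y2 x y y0 x0 := by
  unfold segSgn; simp only [max_comm y y2, ne_comm]

lemma segSgn_hor (y x x' y0 x0 : ℤ) : segSgn y x y y0 x0 = segSgn y x' y y0 x0 := by
  unfold segSgn; simp

/-- Adjacency of integer cells. -/
def adjZ (y x y2 x2 : ℤ) : Prop :=
  ((y2 = y ∧ x2 = x + 1) ∨ (y2 = y + 1 ∧ x2 = x)) ∨ ((y = y2 ∧ x = x2 + 1) ∨ (y = y2 + 1 ∧ x = x2))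

lemma pair_sign (n y x y2 x2 y' x' y2' x2' : ℤ)
    (hx : 0 ≤ x) (hxn : x < n) (hx2 : 0 ≤ x2) (hxn2 : x2 < n)
    (hx' : 0 ≤ x') (hxn' : x' < n) (hx2' : 0 ≤ x2') (hxn2' : x2' < n)
    (h : adjZ y x y2 x2) (h' : adjZ y' x' y2' x2')
    (d1 : ¬ (y = y' ∧ x = x')) (d2 : ¬ (y = y2' ∧ x = x2'))
    (d3 : ¬ (y2 = y' ∧ x2 = x')) (d4 : ¬ (y2 = y2' ∧ x2 = x2')) :
    segSgn y x y2 y' x' * segSgn y x y2 y2' x2' *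
      crossSgn (y * n + x) (y2 * n + x2) (y' * n + x') (y2' * n + x2') = levSgn y y2 y' y2' := by
  have key : ∀ y' x' y2' x2' : ℤ, 0 ≤ x' → x' < n → 0 ≤ x2' → x2' < n → 
      ((y2' = y' ∧ x2' = x' + 1) ∨ (y2' = y' + 1 ∧ x2' = x')) →
      ¬ (y = y' ∧ x = x') → ¬ (y = y2' ∧ x = x2') →
      ¬ (y2 = y' ∧ x2 = x') → ¬ (y2 = y2' ∧ x2 = x2') →
    segSgn y x y2 y' x' * segSgn y x y2 y2' x2' *
      crossSgn (y * n + x) (y2 * n + x2) (y' * n + x') (y2' * n + x2') = levSgn y y2 y' y2' := by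
    intro y' x' y2' x2' hx' hxn' hx2' hxn2' h' d1 d2 d3 d4
    rcases h with h | h
    · exact pair_sign_aux n y x y2 x2 y' x' y2' x2' hx hxn hx2 hxn2 hx' hxn' hx2' hxn2' h h'
        d1 d2 d3 d4
    · have := pair_sign_aux n y2 x2 y x y' x' y2' x2' hx2 hxn2 hx hxn hx' hxn' hx2' hxn2' h h'
        d3 d4 d1 d2
      rw [crossSgn_swap_left, segSgn_swap y, segSgn_swap y]
      have hl : levSgn y y2 y' y2' = levSgn y2 y y' y2' := by
        unfold levSgn; simp only [min_comm y y2, ne_comm]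
      rw [hl, ← this]
      rcases h with ⟨rfl, -⟩ | ⟨-, rfl⟩
      · rw [segSgn_hor y x x2, segSgn_hor y x x2]
      · rfl
  rcases h' with h' | h'
  · exact key y' x' y2' x2' hx' hxn' hx2' hxn2' h' d1 d2 d3 d4
  · have := key y2' x2' y' x' hx2' hxn2' hx' hxn' h' d2 d1 d4 d3
    rw [crossSgn_swap_right, mul_comm (segSgn _ _ _ _ _), this]
    unfold levSgn; simp only [min_comm y' y2', ne_comm]

lemma adjZ_of_adj {m n : ℕ} {u v : Fin m × Fin n} (h : (gridGraph m n).Adj u v) :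
    adjZ u.1.val u.2.val v.1.val v.2.val := by
  simp only [gridGraph, SimpleGraph.fromRel_adj, Fin.ext_iff] at h
  unfold adjZ
  omega

lemma prod_seg {m n : ℕ} {u v : Fin m × Fin n} (h : (gridGraph m n).Adj u v) :
    ∏ z : Fin m × Fin n, segSgn u.1.val u.2.val v.1.val z.1.val z.2.val = gkap u v := by
  have hz := adjZ_of_adj h
  unfold gkap
  split_ifs with h1
  · refine Finset.prod_eq_one fun z _ => ?_
    unfold segSgn
    rw [if_neg]
    simp [h1]
  · have h2 : u.1.val ≠ v.1.val := fun h => h1 (Fin.ext h)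
    rw [Fintype.prod_prod_type, Finset.prod_eq_single (max u.1 v.1)]
    · have : ∀ z : Fin n, segSgn u.1.val u.2.val v.1.val ((max u.1 v.1 : Fin m)).val z.val =
          if z < u.2 then -1 else 1 := by
        intro z
        unfold segSgn
        congr 1
        rcases le_total u.1 v.1 with h | h
        · rw [max_eq_right h]
          have : u.1.val ≤ v.1.val := h
          simp only [Fin.lt_def]; apply propext; omega
        · rw [max_eq_left h]
          have : v.1.val ≤ u.1.val := h
          simp only [Fin.lt_def]; apply propext; omega
      simp only [this]
      rw [Finset.prod_ite]
      simp only [Finset.prod_const, one_pow, mul_one]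
      congr 1
      have : (Finset.univ.filter fun z : Fin n => z < u.2) = Finset.Iio u.2 := by ext; simp
      rw [this, Fin.card_Iio]
    · intro y _ hy
      refine Finset.prod_eq_one fun z _ => ?_
      unfold segSgn
      rw [if_neg]
      rintro ⟨_, h, _⟩
      apply hy
      rcases le_total u.1 v.1 with h' | h'
      · rw [max_eq_right h']; ext
        have : u.1.val ≤ v.1.val := h'
        simp only at h; omega
      · rw [max_eq_left h']; ext
        have : v.1.val ≤ u.1.val := h'
        simp only at h; omega
    · simp

lemma grid_sign {m n N : ℕ} (B W : Fin N → Fin m × Fin n)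
    (hbij : Function.Bijective (Sum.elim B W))
    (hadj : ∀ i, (gridGraph m n).Adj (B i) (W i)) :
    (∏ i, gkap (B i) (W i)) *
      ∏ i, ∏ j ∈ {i}ᶜ, crossSgn (gpos (B i)) (gpos (W i)) (gpos (B j)) (gpos (W j)) = 1 := by
  have hz := fun i => adjZ_of_adj (hadj i)
  have hinj := hbij.injective
  have h1 : ∀ i, gkap (B i) (W i) = ∏ j ∈ {i}ᶜ,
      (segSgn (B i).1.val (B i).2.val (W i).1.val (B j).1.val (B j).2.val *
       segSgn (B i).1.val (B i).2.val (W i).1.val (W j).1.val (W j).2.val) := by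
    intro i
    rw [← prod_seg (hadj i), ← (Equiv.ofBijective _ hbij).prod_comp, Fintype.prod_sum_type]
    simp only [Equiv.ofBijective_apply, Sum.elim_inl, Sum.elim_inr]
    rw [← Finset.prod_mul_distrib, Fintype.prod_eq_mul_prod_compl i]
    rw [mul_eq_right₀]
    · have := hz i
      unfold adjZ at this
      unfold segSgn
      rw [if_neg (by omega), if_neg (by omega)]; rfl
    · refine Finset.prod_ne_zero_iff.2 fun j _ => mul_ne_zero ?_ ?_ <;>
      · unfold segSgn; split_ifs <;> norm_num
  simp only [h1]
  rw [← Finset.prod_mul_distrib]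
  have h2 : ∀ i j, j ∈ ({i}ᶜ : Finset (Fin N)) → 
      (segSgn (B i).1.val (B i).2.val (W i).1.val (B j).1.val (B j).2.val *
       segSgn (B i).1.val (B i).2.val (W i).1.val (W j).1.val (W j).2.val) *
       crossSgn (gpos (B i)) (gpos (W i)) (gpos (B j)) (gpos (W j)) =
      levSgn (B i).1.val (W i).1.val (B j).1.val (W j).1.val := by
    intro i j hj
    have hij : i ≠ j := by
      rintro rfl; simp at hj
    have nz : ∀ u v : Fin m × Fin n, u ≠ v →
        ¬ ((u.1.val : ℤ) = v.1.val ∧ (u.2.val : ℤ) = v.2.val) := by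
      rintro u v huv ⟨h, h'⟩
      exact huv (Prod.ext (Fin.ext (by exact_mod_cast h)) (Fin.ext (by exact_mod_cast h')))
    unfold gpos
    refine pair_sign n _ _ _ _ _ _ _ _ ?_ ?_ ?_ ?_ ?_ ?_ ?_ ?_ (hz i) (hz j) (nz _ _ ?_)
      (nz _ _ ?_) (nz _ _ ?_) (nz _ _ ?_)
    all_goals first | omega | skip
    · intro h
      have := @hinj (Sum.inl i) (Sum.inl j) h
      simp at this; exact hij this
    · intro h
      have := @hinj (Sum.inl i) (Sum.inr j) h
      simp at this
    · intro h
      have := @hinj (Sum.inr i) (Sum.inl j) h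
      simp at this
    · intro h
      have := @hinj (Sum.inr i) (Sum.inr j) h
      simp at this; exact hij this
  have h3 : ∀ i, (∏ j ∈ {i}ᶜ,
      (segSgn (B i).1.val (B i).2.val (W i).1.val (B j).1.val (B j).2.val *
       segSgn (B i).1.val (B i).2.val (W i).1.val (W j).1.val (W j).2.val)) *
       ∏ j ∈ {i}ᶜ, crossSgn (gpos (B i)) (gpos (W i)) (gpos (B j)) (gpos (W j)) =
      ∏ j ∈ {i}ᶜ, levSgn (B i).1.val (W i).1.val (B j).1.val (W j).1.val := by
    intro i
    rw [← Finset.prod_mul_distrib]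
    exact Finset.prod_congr rfl fun j hj => h2 i j hj
  rw [Finset.prod_congr rfl fun i _ => h3 i]
  rw [← Finset.prod_prod_Ioi_mul_eq_prod_prod_off_diag
    (fun j i => levSgn (B i).1.val (W i).1.val (B j).1.val (W j).1.val)]
  refine Finset.prod_eq_one fun i _ => Finset.prod_eq_one fun j _ => ?_
  unfold levSgn
  split_ifs <;> first | rfl | omega

lemma numPM_eq_perm {V : Type*} (G : SimpleGraph V) {N : ℕ} (b w : Fin N → V)
    (hbij : Function.Bijective (Sum.elim b w))
    (hbb : ∀ i j, ¬ G.Adj (b i) (b j)) (hww : ∀ i j, ¬ G.Adj (w i) (w j)) :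
    numPerfectMatchings G =
      Nat.card {σ : Equiv.Perm (Fin N) // ∀ i, G.Adj (b (σ i)) (w i)} := by
  classical
  have hinj := hbij.injective
  have hb : Function.Injective b := fun i j h => by
    have := @hinj (Sum.inl i) (Sum.inl j) h
    simpa using this
  have hw : Function.Injective w := fun i j h => by
    have := @hinj (Sum.inr i) (Sum.inr j) h
    simpa using this
  have hbw : ∀ i j, b i ≠ w j := fun i j h => by
    have := @hinj (Sum.inl i) (Sum.inr j) h
    simp at this
  have hcov : ∀ v, (∃ i, v = b i) ∨ ∃ i, v = w i := fun v => by
    obtain ⟨x, hx⟩ := hbij.surjective v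
    rcases x with i | i
    · exact Or.inl ⟨i, hx.symm⟩
    · exact Or.inr ⟨i, hx.symm⟩
  symm
  unfold numPerfectMatchings
  have hmem : ∀ (σ : Equiv.Perm (Fin N)) e, e ∈ Finset.univ.image (fun i => s(b (σ i), w i)) ↔
      ∃ i, s(b (σ i), w i) = e := by intro σ e; simp
  refine Nat.card_eq_of_bijective (fun σ => ⟨Finset.univ.image fun i => s(b (σ.1 i), w i), ?_, ?_⟩)
    ⟨?_, ?_⟩
  · intro e he
    obtain ⟨i, rfl⟩ := (hmem _ _).1 he
    exact σ.2 i
  · intro v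
    rcases hcov v with ⟨j, rfl⟩ | ⟨j, rfl⟩
    · refine ⟨s(b (σ.1 (σ.1.symm j)), w (σ.1.symm j)), ⟨(hmem _ _).2 ⟨_, rfl⟩, by simp⟩, ?_⟩
      rintro e ⟨he, hv⟩
      obtain ⟨i, rfl⟩ := (hmem _ _).1 he
      rw [Sym2.mem_iff] at hv
      rcases hv with h | h
      · have := hb h
        subst this
        simp
      · exact absurd h (hbw _ _)
    · refine ⟨s(b (σ.1 j), w j), ⟨(hmem _ _).2 ⟨_, rfl⟩, by simp⟩, ?_⟩
      rintro e ⟨he, hv⟩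
      obtain ⟨i, rfl⟩ := (hmem _ _).1 he
      rw [Sym2.mem_iff] at hv
      rcases hv with h | h
      · exact absurd h.symm (hbw _ _)
      · rw [hw h]
  · intro σ τ h
    have h' := congrArg Subtype.val h
    simp only at h'
    refine Subtype.ext (Equiv.ext fun i => ?_)
    have : s(b (σ.1 i), w i) ∈ Finset.univ.image (fun i => s(b (τ.1 i), w i)) := by
      rw [← h']; exact (hmem _ _).2 ⟨i, rfl⟩
    obtain ⟨j, hj⟩ := (hmem _ _).1 this
    rw [Sym2.eq_iff] at hj
    rcases hj with ⟨h1, h2⟩ | ⟨h1, h2⟩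
    · have := hw h2; subst this; exact (hb h1).symm
    · exact absurd h1 (hbw _ _)
  · rintro ⟨M, hM1, hM2⟩
    have hex : ∀ i, ∃ j, s(b j, w i) ∈ M := by
      intro i
      obtain ⟨e, ⟨he, hv⟩, -⟩ := hM2 (w i)
      obtain ⟨u, rfl⟩ := Sym2.mem_iff_exists.1 hv
      rcases hcov u with ⟨j, rfl⟩ | ⟨j, rfl⟩
      · exact ⟨j, by rwa [Sym2.eq_swap]⟩
      · exact absurd (hM1 _ he) (hww _ _)
    choose g hg using hex
    have hginj : Function.Injective g := by
      intro i j h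
      have := (hM2 (b (g i))).unique ⟨hg i, by simp⟩ ⟨hg j, by simp [h]⟩
      rw [Sym2.eq_iff] at this
      rcases this with ⟨h1, h2⟩ | ⟨h1, h2⟩
      · exact hw h2
      · exact absurd h1 (hbw _ _)
    refine ⟨⟨Equiv.ofBijective g (Finite.injective_iff_bijective.1 hginj), fun i => hM1 _ (hg i)⟩, ?_⟩
    refine Subtype.ext ?_
    simp only
    ext e
    rw [hmem]
    constructor
    · rintro ⟨i, rfl⟩; exact hg i
    · intro he
      have hE := hM1 e he
      induction e using Sym2.ind with
      | _ u v =>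
        have hmm : ∀ i, w i ∈ s(u, v) → ∃ i, s(b (g i), w i) = s(u, v) := fun i hi =>
          ⟨i, (hM2 (w i)).unique ⟨hg i, by simp⟩ ⟨he, hi⟩⟩
        rcases hcov u with ⟨i, rfl⟩ | ⟨i, rfl⟩
        · rcases hcov v with ⟨j, rfl⟩ | ⟨j, rfl⟩
          · exact absurd hE (hbb _ _)
          · exact hmm j (by simp)
        · exact hmm i (by simp)

/-- The antisymmetric path matrix. -/
def gQ (n : ℕ) : Matrix (Fin n) (Fin n) ℤ :=
  Matrix.of fun x x' => if x.val + 1 = x'.val then 1 else if x'.val + 1 = x.val then -1 else 0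

/-- The alternating sign diagonal matrix. -/
def gD (n : ℕ) : Matrix (Fin n) (Fin n) ℤ := Matrix.diagonal fun x => (-1) ^ x.val

open scoped Kronecker in
/-- The (antisymmetric) Kasteleyn matrix of the grid. -/
def gA (m n : ℕ) : Matrix (Fin m × Fin n) (Fin m × Fin n) ℤ :=
  (1 : Matrix (Fin m) (Fin m) ℤ) ⊗ₖ gQ n + gQ m ⊗ₖ gD n

lemma gA_apply {m n : ℕ} (u v : Fin m × Fin n) : gA m n u v =
    (if u.1 = v.1 then 1 else 0) * (if u.2.val + 1 = v.2.val then 1 else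
      if v.2.val + 1 = u.2.val then -1 else 0) +
    (if u.1.val + 1 = v.1.val then 1 else if v.1.val + 1 = u.1.val then -1 else 0) *
      (if u.2 = v.2 then (-1) ^ u.2.val else 0) := by
  simp [gA, gQ, gD, Matrix.one_apply, Matrix.diagonal_apply]

lemma gA_of_not_adj {m n : ℕ} {u v : Fin m × Fin n} (h : ¬ (gridGraph m n).Adj u v) :
    gA m n u v = 0 := by
  rw [gA_apply]
  simp only [gridGraph, SimpleGraph.fromRel_adj, Fin.ext_iff, Prod.ext_iff, ne_eq] at h ⊢
  split_ifs <;> first | omega | simp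

lemma gA_of_adj {m n : ℕ} {u v : Fin m × Fin n} (h : (gridGraph m n).Adj u v) :
    gA m n u v = Int.sign (gpos v - gpos u) * gkap u v := by
  have hz := adjZ_of_adj h
  rw [gA_apply]
  unfold gpos gkap
  unfold adjZ at hz
  have hn : (0 : ℤ) < n := by have := u.2.2; omega
  simp only [Fin.ext_iff]
  rcases hz with (⟨h1, h2⟩ | ⟨h1, h2⟩) | (⟨h1, h2⟩ | ⟨h1, h2⟩)
  · rw [Int.sign_eq_one_of_pos (by rw [h1, h2]; linarith)]
    split_ifs <;> first | omega | simp
  · rw [Int.sign_eq_one_of_pos (by rw [h1, h2]; linarith)]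
    split_ifs <;> first | omega | simp
  · rw [Int.sign_eq_neg_one_of_neg (by rw [h1, h2]; linarith)]
    split_ifs <;> first | omega | simp
  · rw [Int.sign_eq_neg_one_of_neg (by rw [h1, h2]; linarith)]
    split_ifs <;> first | omega | simp

lemma gA_transpose (m n : ℕ) : (gA m n).transpose = - gA m n := by
  ext u v
  rw [Matrix.transpose_apply, Matrix.neg_apply, gA_apply, gA_apply]
  simp only [Fin.ext_iff]
  by_cases hc : u.2.val = v.2.val
  · rw [hc]; split_ifs <;> first | omega | simp
  · split_ifs <;> first | omega | simp

lemma gpos_inj {m n : ℕ} : Function.Injective (gpos : Fin m × Fin n → ℤ) := by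
  intro u v h
  unfold gpos at h
  have h1 := lex_lt n u.1.val u.2.val v.1.val v.2.val (by omega) (by omega) (by omega) (by omega)
  have h2 := lex_lt n v.1.val v.2.val u.1.val u.2.val (by omega) (by omega) (by omega) (by omega)
  have h3 := h1.not.1 h.not_lt
  have h4 := h2.not.1 h.not_gt
  exact Prod.ext (Fin.ext (by omega)) (Fin.ext (by omega))

lemma det_eq_numPM {m n N : ℕ} (b w : Fin N → Fin m × Fin n)
    (hbij : Function.Bijective (Sum.elim b w))
    (hbb : ∀ i j, ¬ (gridGraph m n).Adj (b i) (b j))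
    (hww : ∀ i j, ¬ (gridGraph m n).Adj (w i) (w j)) :
    (Matrix.of fun i j => gA m n (b i) (w j)).det ^ 4 =
      (numPerfectMatchings (gridGraph m n) : ℤ) ^ 4 := by
  classical
  rw [numPM_eq_perm _ b w hbij hbb hww]
  have hinj := hbij.injective
  have hb : Function.Injective b := fun i j h => by
    have := @hinj (Sum.inl i) (Sum.inl j) h
    simpa using this
  have hw : Function.Injective w := fun i j h => by
    have := @hinj (Sum.inr i) (Sum.inr j) h
    simpa using this
  have hbw : ∀ i j, b i ≠ w j := fun i j h => by
    have := @hinj (Sum.inl i) (Sum.inr j) h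
    simp at this
  obtain ⟨ε, hε, hs⟩ := sign_eq_cross (gpos ∘ b) (gpos ∘ w) (gpos_inj.comp hb) (gpos_inj.comp hw)
    (fun i j h => hbw i j (gpos_inj h))
  have hterm : ∀ σ : Equiv.Perm (Fin N),
      (Equiv.Perm.sign σ : ℤ) * ∏ i, gA m n (b (σ i)) (w i) =
        if ∀ i, (gridGraph m n).Adj (b (σ i)) (w i) then ε else 0 := by
    intro σ
    split_ifs with h
    · have h1 := hs σ
      simp only [Function.comp] at h1
      have h2 := grid_sign (fun i => b (σ i)) w (by
        have : Sum.elim (fun i => b (σ i)) w =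
            Sum.elim b w ∘ (Equiv.sumCongr σ (Equiv.refl _)) := by
          ext x <;> rcases x with x | x <;> rfl
        rw [this]
        exact hbij.comp (Equiv.bijective _)) h
      rw [Finset.prod_congr rfl fun i _ => gA_of_adj (h i), Finset.prod_mul_distrib]
      have h3 : (Equiv.Perm.sign σ : ℤ) * (Equiv.Perm.sign σ : ℤ) = 1 := by
        rw [← Units.val_mul, Int.units_mul_self]; rfl
      calc _ = (Equiv.Perm.sign σ : ℤ) * ((∏ i, Int.sign (gpos (w i) - gpos (b (σ i)))) *
              (∏ i, gkap (b (σ i)) (w i))) * 1 := by ring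
        _ = (Equiv.Perm.sign σ : ℤ) * (∏ i, gkap (b (σ i)) (w i)) *
              (∏ i, gkap (b (σ i)) (w i)) * ((Equiv.Perm.sign σ : ℤ) * ε) := by
            rw [← h2, ← h1]; ring
        _ = ((Equiv.Perm.sign σ : ℤ) * (Equiv.Perm.sign σ : ℤ)) *
              (∏ i, gkap (b (σ i)) (w i) * gkap (b (σ i)) (w i)) * ε := by
            rw [Finset.prod_mul_distrib]; ring
        _ = ε := by
            rw [h3, Finset.prod_eq_one, one_mul, one_mul]
            intro i _
            unfold gkap
            split_ifs
            · rfl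
            · rw [← mul_pow]; simp
    · push Not at h
      obtain ⟨i, hi⟩ := h
      rw [Finset.prod_eq_zero (Finset.mem_univ i) (gA_of_not_adj hi), mul_zero]
  have hdet : (Matrix.of fun i j => gA m n (b i) (w j)).det =
      (Nat.card {σ : Equiv.Perm (Fin N) // ∀ i, (gridGraph m n).Adj (b (σ i)) (w i)} : ℤ) * ε := by
    rw [Matrix.det_apply']
    simp only [Matrix.of_apply]
    have hsum : (∑ σ : Equiv.Perm (Fin N), ((Equiv.Perm.sign σ : ℤˣ) : ℤ) * ∏ i, gA m n (b (σ i)) (w i)) =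
        ∑ σ : Equiv.Perm (Fin N), if ∀ i, (gridGraph m n).Adj (b (σ i)) (w i) then ε else 0 :=
      Finset.sum_congr rfl fun σ _ => hterm σ
    simp only [Int.cast_id]
    rw [hsum, ← Finset.sum_filter, Finset.sum_const,
      Nat.card_eq_fintype_card, Fintype.card_subtype]
    simp
  rw [hdet, mul_pow]
  rcases hε with rfl | rfl <;> simp

lemma detA_sq {m n N : ℕ} (b w : Fin N → Fin m × Fin n)
    (hbij : Function.Bijective (Sum.elim b w))
    (hbb : ∀ i j, ¬ (gridGraph m n).Adj (b i) (b j))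
    (hww : ∀ i j, ¬ (gridGraph m n).Adj (w i) (w j)) :
    (gA m n * gA m n).det = (numPerfectMatchings (gridGraph m n) : ℤ) ^ 4 := by
  rw [← det_eq_numPM b w hbij hbb hww]
  set B := (Matrix.of fun i j => gA m n (b i) (w j)) with hB
  set e := Equiv.ofBijective _ hbij
  have h1 : (gA m n).submatrix e e = Matrix.fromBlocks 0 B (-B.transpose) 0 := by
    have ht : ∀ u v, gA m n v u = - gA m n u v := fun u v =>
      congrFun (congrFun (gA_transpose m n) u) v
    ext i j
    rcases i with i | i <;> rcases j with j | j
    · exact gA_of_not_adj (hbb i j)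
    · rfl
    · exact ht _ _
    · exact gA_of_not_adj (hww i j)
  rw [Matrix.det_mul, ← Matrix.det_submatrix_equiv_self e, h1, ← Matrix.det_mul,
    Matrix.fromBlocks_multiply]
  simp only [Matrix.zero_mul, Matrix.mul_zero, add_zero, zero_add]
  rw [Matrix.det_fromBlocks_zero₂₁, Matrix.det_mul, Matrix.det_mul]
  have h2 : (-B.transpose).det = (-1) ^ N * B.det := by
    rw [Matrix.det_neg, Matrix.det_transpose, Fintype.card_fin]
  rw [h2]
  have : ((-1 : ℤ) ^ N) * (-1) ^ N = 1 := by rw [← mul_pow]; simp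
  calc _ = ((-1 : ℤ) ^ N) * (-1) ^ N * B.det ^ 4 := by ring
    _ = _ := by rw [this, one_mul]

/-- Column flip pairing adjacent columns. -/
def colFlip (m n : ℕ) (hn : Even n) (v : Fin m × Fin n) : Fin m × Fin n :=
  (v.1, ⟨if v.2.val % 2 = 0 then v.2.val + 1 else v.2.val - 1, by
    obtain ⟨k, hk⟩ := hn
    have := v.2.2
    split_ifs <;> omega⟩)

lemma exists_coloring (m n : ℕ) (hn : Even n) : ∃ (N : ℕ) (b w : Fin N → Fin m × Fin n),
    Function.Bijective (Sum.elim b w) ∧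
    (∀ i j, ¬ (gridGraph m n).Adj (b i) (b j)) ∧ (∀ i j, ¬ (gridGraph m n).Adj (w i) (w j)) := by
  classical
  let P : Fin m × Fin n → Prop := fun v => (v.1.val + v.2.val) % 2 = 0
  let eb : Fin (Fintype.card {v // P v}) ≃ {v // P v} := (Fintype.equivFin _).symm
  have hcol2 : ∀ v, colFlip m n hn (colFlip m n hn v) = v := by
    intro v
    refine Prod.ext rfl (Fin.ext ?_)
    simp only [colFlip]
    split_ifs <;> omega
  have hP : ∀ v, P (colFlip m n hn v) ↔ ¬ P v := by
    intro v
    simp only [colFlip, P]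
    split_ifs <;> omega
  let ew : {v // P v} ≃ {v // ¬ P v} :=
    { toFun := fun v => ⟨colFlip m n hn v.1, by rw [hP]; exact not_not.2 v.2⟩
      invFun := fun v => ⟨colFlip m n hn v.1, (hP _).2 v.2⟩
      left_inv := fun v => Subtype.ext (hcol2 _)
      right_inv := fun v => Subtype.ext (hcol2 _) }
  refine ⟨_, fun i => (eb i).1, fun i => (ew (eb i)).1, ?_, ?_, ?_⟩
  · have : Sum.elim (fun i => (eb i).1) (fun i => (ew (eb i)).1) =
        (Equiv.sumCompl P) ∘ (Equiv.sumCongr eb (eb.trans ew)) := by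
      ext x <;> rcases x with x | x <;> rfl
    rw [this]
    exact (Equiv.bijective _).comp (Equiv.bijective _)
  · intro i j h
    have h1 := adjZ_of_adj h
    have h2 := (eb i).2
    have h3 := (eb j).2
    simp only [P] at h2 h3
    unfold adjZ at h1
    simp only at h1
    omega
  · intro i j h
    have h1 := adjZ_of_adj h
    have h2 := (ew (eb i)).2
    have h3 := (ew (eb j)).2
    simp only [P] at h2 h3
    unfold adjZ at h1
    simp only at h1
    omega

lemma detA_eq {m n : ℕ} (hn : Even n) :
    (gA m n * gA m n).det = (numPerfectMatchings (gridGraph m n) : ℤ) ^ 4 := by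
  obtain ⟨N, b, w, h1, h2, h3⟩ := exists_coloring m n hn
  exact detA_sq b w h1 h2 h3

open scoped Kronecker in
lemma gA_sq (m n : ℕ) : gA m n * gA m n =
    (1 : Matrix (Fin m) (Fin m) ℤ) ⊗ₖ (gQ n * gQ n) +
      (gQ m * gQ m) ⊗ₖ (1 : Matrix (Fin n) (Fin n) ℤ) := by
  have hDD : gD n * gD n = 1 := by
    rw [gD, Matrix.diagonal_mul_diagonal, ← Matrix.diagonal_one]
    congr 1; ext x; rw [← mul_pow]; simp
  have hQD : gQ n * gD n = - (gD n * gQ n) := by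
    ext x y
    rw [Matrix.neg_apply, gD, Matrix.mul_diagonal, Matrix.diagonal_mul]
    simp only [gQ, Matrix.of_apply]
    split_ifs with h h
    · rw [← h, pow_succ]; ring
    · rw [← h, pow_succ]; ring
    · ring
  unfold gA
  rw [Matrix.add_mul, Matrix.mul_add, Matrix.mul_add, ← Matrix.mul_kronecker_mul,
    ← Matrix.mul_kronecker_mul, ← Matrix.mul_kronecker_mul, ← Matrix.mul_kronecker_mul, hDD, hQD,
    Matrix.one_mul, Matrix.one_mul, Matrix.mul_one]
  have : gQ m ⊗ₖ (-(gD n * gQ n)) = -(gQ m ⊗ₖ (gD n * gQ n)) := by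
    ext i j; simp
  rw [this]
  abel

/-- The path matrix over `ℂ`. -/
noncomputable def cQ (n : ℕ) : Matrix (Fin n) (Fin n) ℂ := (gQ n).map (Int.castRingHom ℂ)

/-- Grid angles. -/
noncomputable def ang (n k : ℕ) : ℝ := (k + 1) * Real.pi / (n + 1)

/-- The matrix of eigenvectors. -/
noncomputable def cS (n : ℕ) : Matrix (Fin n) (Fin n) ℂ :=
  Matrix.of fun x k => Complex.I ^ x.val * Complex.sin ((x.val + 1) * ang n k.val)

/-- The eigenvalues. -/
noncomputable def cL (n : ℕ) (k : Fin n) : ℂ := 2 * Complex.I * Complex.cos (ang n k.val)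

lemma cQ_sum (n : ℕ) (x : Fin n) (f : ℕ → ℂ) : ∑ y : Fin n, cQ n x y * f y.val =
    (if x.val + 1 < n then f (x.val + 1) else 0) - (if 0 < x.val then f (x.val - 1) else 0) := by
  have h : ∀ y : Fin n, cQ n x y * f y.val =
      (if x.val + 1 = y.val then f y.val else 0) - (if y.val + 1 = x.val then f y.val else 0) := by
    intro y
    simp only [cQ, gQ, Matrix.map_apply, Matrix.of_apply]
    split_ifs <;> first | omega | simp
  simp only [h, Finset.sum_sub_distrib]
  congr 1
  · split_ifs with h1
    · rw [Finset.sum_eq_single (⟨x.val + 1, h1⟩ : Fin n)]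
      · simp
      · intro y _ hy
        rw [if_neg]; intro h; exact hy (Fin.ext h.symm)
      · simp
    · exact Finset.sum_eq_zero fun y _ => by rw [if_neg]; omega
  · split_ifs with h1
    · rw [Finset.sum_eq_single (⟨x.val - 1, by omega⟩ : Fin n)]
      · simp only; rw [if_pos]; omega
      · intro y _ hy
        rw [if_neg]; intro h; exact hy (Fin.ext (by simp only; omega))
      · simp
    · exact Finset.sum_eq_zero fun y _ => by rw [if_neg]; omega

lemma cQ_mul_cS (n : ℕ) : cQ n * cS n = cS n * Matrix.diagonal (cL n) := by
  ext x k
  rw [Matrix.mul_diagonal, Matrix.mul_apply]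
  have := cQ_sum n x (fun y => Complex.I ^ y * Complex.sin ((y + 1) * ang n k.val))
  simp only [cS, Matrix.of_apply]
  rw [this]
  have h0 : (if x.val + 1 < n then Complex.I ^ (x.val + 1) *
      Complex.sin (((x.val + 1 : ℕ) + 1) * ang n k.val) else 0) = Complex.I ^ (x.val + 1) *
      Complex.sin (((x.val : ℂ) + 2) * ang n k.val) := by
    split_ifs with h
    · push_cast; ring_nf
    · have hx : x.val + 1 = n := by omega
      have : ((x.val : ℂ) + 2) * ang n k.val = ((k.val + 1 : ℕ) : ℂ) * Real.pi := by
        have h2 : (n : ℂ) = x.val + 1 := by exact_mod_cast hx.symm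
        have h3 : ((x.val : ℂ) + 1 + 1) ≠ 0 := by exact_mod_cast (by omega : x.val + 1 + 1 ≠ 0)
        unfold ang
        push_cast
        rw [h2]
        field_simp
        ring
      rw [this, Complex.sin_nat_mul_pi, mul_zero]
  have h1 : (if 0 < x.val then Complex.I ^ (x.val - 1) *
      Complex.sin (((x.val - 1 : ℕ) + 1) * ang n k.val) else 0) = - Complex.I ^ (x.val + 1) *
      Complex.sin ((x.val : ℂ) * ang n k.val) := by
    split_ifs with h
    · obtain ⟨j, hj⟩ : ∃ j, x.val = j + 1 := ⟨x.val - 1, by omega⟩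
      rw [hj]
      simp only [Nat.add_sub_cancel]
      rw [pow_succ, pow_succ, mul_assoc (Complex.I ^ j), Complex.I_mul_I]
      push_cast; ring
    · have hx : x.val = 0 := by omega
      rw [hx]; simp
  rw [h0, h1]
  unfold cL
  have e1 : ((x.val : ℂ) + 2) * ang n k.val = (x.val + 1) * ang n k.val + ang n k.val := by ring
  have e2 : ((x.val : ℂ)) * ang n k.val = (x.val + 1) * ang n k.val - ang n k.val := by ring
  rw [e1, e2, Complex.sin_add, Complex.sin_sub, pow_succ]
  ring

lemma ang_mem {n k : ℕ} (hk : k < n) : 0 < ang n k ∧ ang n k < Real.pi := by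
  unfold ang
  have hk' : (k : ℝ) + 1 < n + 1 := by exact_mod_cast (by omega : k + 1 < n + 1)
  have hpi := Real.pi_pos
  constructor
  · positivity
  · rw [div_lt_iff₀ (by positivity)]; nlinarith

lemma ang_inj {n k k' : ℕ} (h : ang n k = ang n k') : k = k' := by
  unfold ang at h
  have h3 : ((n : ℝ) + 1) ≠ 0 := by positivity
  have hpi := Real.pi_ne_zero
  field_simp at h
  exact_mod_cast (by linarith : (k : ℝ) = k')

lemma cL_inj (n : ℕ) : Function.Injective (cL n) := by
  intro k k' h
  unfold cL at h
  have h1 : Complex.cos (ang n k.val) = Complex.cos (ang n k'.val) := by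
    have : (2 * Complex.I) ≠ 0 := by simp
    exact mul_left_cancel₀ this h
  rw [← Complex.ofReal_cos, ← Complex.ofReal_cos] at h1
  have h2 := Complex.ofReal_injective h1
  have a := ang_mem k.2
  have b := ang_mem k'.2
  exact Fin.ext (ang_inj (Real.injOn_cos ⟨a.1.le, a.2.le⟩ ⟨b.1.le, b.2.le⟩ h2))

lemma cS_det (n : ℕ) : (cS n).det ≠ 0 := by
  have hli : LinearIndependent ℂ (cS n).col := by
    refine Module.End.eigenvectors_linearIndependent' (Matrix.toLin' (cQ n)) (cL n) (cL_inj n) _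
      (fun k => ⟨?_, ?_⟩)
    · rw [Module.End.mem_eigenspace_iff, Matrix.toLin'_apply]
      ext x
      have := congrFun (congrFun (cQ_mul_cS n) x) k
      rw [Matrix.mul_diagonal, Matrix.mul_apply] at this
      simp only [Matrix.mulVec, dotProduct, Matrix.col_apply, Pi.smul_apply, smul_eq_mul]
      rw [this, mul_comm]
    · intro h
      have h0 : 0 < n := by have := k.2; omega
      have := congrFun h ⟨0, h0⟩
      simp only [Matrix.col_apply, cS, Matrix.of_apply, Pi.zero_apply] at this
      simp only [pow_zero, one_mul, Nat.cast_zero, zero_add] at this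
      rw [← Complex.ofReal_sin] at this
      have a := ang_mem k.2
      exact (Real.sin_pos_of_pos_of_lt_pi a.1 a.2).ne' (by exact_mod_cast this)
  rw [Matrix.linearIndependent_cols_iff_isUnit] at hli
  exact ((Matrix.isUnit_iff_isUnit_det _).1 hli).ne_zero

open scoped Kronecker in
lemma detA_prod (m n : ℕ) : (((gA m n * gA m n).det : ℤ) : ℂ) =
    ∏ p : Fin m × Fin n, (cL m p.1 ^ 2 + cL n p.2 ^ 2) := by
  have h1 : (((gA m n * gA m n).det : ℤ) : ℂ) =
      ((1 : Matrix (Fin m) (Fin m) ℂ) ⊗ₖ (cQ n * cQ n) +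
      (cQ m * cQ m) ⊗ₖ (1 : Matrix (Fin n) (Fin n) ℂ)).det := by
    rw [gA_sq]
    change Int.castRingHom ℂ _ = _
    rw [RingHom.map_det]
    congr 1
    unfold cQ
    rw [← Matrix.map_mul, ← Matrix.map_mul]
    ext i j
    simp [Matrix.one_apply, Matrix.map_apply]
  rw [h1]
  have hsq : ∀ n, cQ n * cQ n * cS n = cS n * Matrix.diagonal (fun k => cL n k ^ 2) := by
    intro n
    rw [Matrix.mul_assoc, cQ_mul_cS, ← Matrix.mul_assoc, cQ_mul_cS, Matrix.mul_assoc,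
      Matrix.diagonal_mul_diagonal]
    simp only [sq]
  have h2 : ((1 : Matrix (Fin m) (Fin m) ℂ) ⊗ₖ (cQ n * cQ n) +
      (cQ m * cQ m) ⊗ₖ (1 : Matrix (Fin n) (Fin n) ℂ)) * (cS m ⊗ₖ cS n) =
      (cS m ⊗ₖ cS n) * Matrix.diagonal (fun p : Fin m × Fin n => cL m p.1 ^ 2 + cL n p.2 ^ 2) := by
    rw [Matrix.add_mul, ← Matrix.mul_kronecker_mul, ← Matrix.mul_kronecker_mul, hsq, hsq,
      Matrix.one_mul, Matrix.one_mul]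
    ext p q
    simp only [Matrix.add_apply, Matrix.kroneckerMap_apply, Matrix.mul_diagonal]
    ring
  have h3 := congrArg Matrix.det h2
  rw [Matrix.det_mul, Matrix.det_mul, Matrix.det_diagonal, mul_comm] at h3
  refine mul_left_cancel₀ ?_ h3
  rw [Matrix.det_kronecker]
  exact mul_ne_zero (pow_ne_zero _ (cS_det m)) (pow_ne_zero _ (cS_det n))

lemma numPM_prod {m n : ℕ} (hn : Even n) :
    (numPerfectMatchings (gridGraph m n) : ℝ) ^ 4 =
      ∏ j : Fin m, ∏ k : Fin n, (4 * Real.cos (ang m j) ^ 2 + 4 * Real.cos (ang n k) ^ 2) := by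
  have h := detA_prod m n
  rw [detA_eq hn] at h
  rw [← Fintype.prod_prod_type']
  have h2 : ∀ p : Fin m × Fin n, cL m p.1 ^ 2 + cL n p.2 ^ 2 =
      (-1) * ((4 * Real.cos (ang m p.1) ^ 2 + 4 * Real.cos (ang n p.2) ^ 2 : ℝ) : ℂ) := by
    intro p
    unfold cL
    push_cast
    rw [mul_pow, mul_pow, mul_pow, mul_pow, Complex.I_sq]
    ring
  rw [Finset.prod_congr rfl fun p _ => h2 p, Finset.prod_mul_distrib, Finset.prod_const,
    Finset.card_univ, Fintype.card_prod, Fintype.card_fin, Fintype.card_fin,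
    (hn.mul_left m).neg_one_pow, one_mul] at h
  exact_mod_cast h

lemma cheb_eval_real (n : ℕ) : Polynomial.Chebyshev.U ℝ n =
    Polynomial.C ((2 : ℝ) ^ n) *
      ∏ k ∈ Finset.range n, (Polynomial.X - Polynomial.C (Real.cos (ang n k))) := by
  have hr := Polynomial.Chebyshev.roots_U_real n
  have hinj : Set.InjOn (fun k : ℕ => Real.cos ((k + 1) * Real.pi / (n + 1)))
      (Finset.range n : Set ℕ) := by
    intro i hi j hj hij
    have hi' : i < n := by simpa using hi
    have hj' : j < n := by simpa using hj
    have h1 := ang_mem hi'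
    have h2 := ang_mem hj'
    have := Real.injOn_cos ⟨h1.1.le, h1.2.le⟩ ⟨h2.1.le, h2.2.le⟩ hij
    unfold ang at this
    have hp := Real.pi_pos
    have h0 : (n : ℝ) + 1 ≠ 0 := by positivity
    field_simp at this
    have h3 : (i : ℝ) = j := by linarith
    exact_mod_cast h3
  have hcard : Multiset.card (Polynomial.Chebyshev.U ℝ n).roots =
      (Polynomial.Chebyshev.U ℝ n).natDegree := by
    rw [hr, Polynomial.Chebyshev.natDegree_U_natCast, Finset.card_val,
      Finset.card_image_of_injOn hinj, Finset.card_range]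
  have h := Polynomial.C_leadingCoeff_mul_prod_multiset_X_sub_C hcard
  rw [Polynomial.Chebyshev.leadingCoeff_U_natCast, hr] at h
  rw [← h]
  congr 1
  change ∏ x ∈ (Finset.range n).image (fun k : ℕ => Real.cos ((k + 1) * Real.pi / (n + 1))),
    (Polynomial.X - Polynomial.C x) = _
  rw [Finset.prod_image hinj]
  rfl

lemma cheb_eval (n : ℕ) (z : ℂ) : (Polynomial.Chebyshev.U ℂ n).eval z =
    ∏ k ∈ Finset.range n, (2 * (z - (Real.cos (ang n k) : ℂ))) := by
  rw [← Polynomial.Chebyshev.map_U (algebraMap ℝ ℂ), cheb_eval_real, Finset.prod_mul_distrib]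
  simp [Polynomial.map_prod, Polynomial.eval_prod]

lemma cheb_prod {n : ℕ} (hn : Even n) (a : ℝ) :
    ∏ k : Fin n, (4 * Real.sinh a ^ 2 + 4 * Real.cos (ang n k) ^ 2) =
      (Real.cosh ((n + 1) * a) / Real.cosh a) ^ 2 := by
  have key : ((∏ k : Fin n, (4 * Real.sinh a ^ 2 + 4 * Real.cos (ang n k) ^ 2) : ℝ) : ℂ) =
      (((Real.cosh ((n + 1) * a) / Real.cosh a) ^ 2 : ℝ) : ℂ) := by
    have e1 : ((∏ k : Fin n, (4 * Real.sinh a ^ 2 + 4 * Real.cos (ang n k) ^ 2) : ℝ) : ℂ) =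
        (Polynomial.Chebyshev.U ℂ n).eval (Complex.sinh a * Complex.I) *
          (Polynomial.Chebyshev.U ℂ n).eval (-(Complex.sinh a * Complex.I)) := by
      rw [cheb_eval, cheb_eval, ← Finset.prod_mul_distrib,
        Fin.prod_univ_eq_prod_range
          (fun k => 4 * Real.sinh a ^ 2 + 4 * Real.cos (ang n k) ^ 2) n, Complex.ofReal_prod]
      refine Finset.prod_congr rfl fun k _ => ?_
      push_cast
      linear_combination (4 * Complex.sinh (a : ℂ) ^ 2) * Complex.I_sq
    have e2 : (n : ℤ).negOnePow = 1 := Int.negOnePow_even _ (by exact_mod_cast hn)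
    rw [e1, Polynomial.Chebyshev.U_eval_neg, e2]
    have hc : (Complex.cosh a : ℂ) ≠ 0 := by
      rw [← Complex.ofReal_cosh]; exact_mod_cast (Real.cosh_pos a).ne'
    have e3 := Polynomial.Chebyshev.U_complex_cos (Real.pi / 2 - a * Complex.I) (n : ℤ)
    rw [Complex.cos_pi_div_two_sub, Complex.sin_pi_div_two_sub, Complex.sin_mul_I,
      Complex.cos_mul_I] at e3
    obtain ⟨p, rfl⟩ := hn
    have e4 : Complex.sin ((((p + p : ℕ) : ℤ) + 1) * (Real.pi / 2 - a * Complex.I)) =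
        (-1) ^ p * Complex.cosh (((p + p : ℕ) + 1) * a) := by
      have h1 : (((((p + p : ℕ) : ℤ) : ℂ) + 1) * (Real.pi / 2 - a * Complex.I)) =
          Real.pi / 2 - ((((p + p : ℕ) : ℂ) + 1) * a * Complex.I - p * Real.pi) := by
        push_cast; ring
      rw [h1, Complex.sin_pi_div_two_sub, Complex.cos_antiperiodic.sub_nat_mul_eq p,
        Complex.cos_mul_I]
    rw [e4] at e3
    have e5 := (eq_div_iff hc).2 e3
    rw [e5]
    push_cast
    have : ((-1 : ℂ) ^ p) * (-1) ^ p = 1 := by rw [← mul_pow]; simp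
    field_simp
    linear_combination (Complex.cosh (((p : ℂ) * (1 + 1) + 1) * a)) ^ 2 * this
  exact_mod_cast key

lemma log_cosh_bounds {t : ℝ} (ht : 0 ≤ t) :
    t - Real.log 2 ≤ Real.log (Real.cosh t) ∧ Real.log (Real.cosh t) ≤ t := by
  have h1 : Real.cosh t ≤ Real.exp t := by
    rw [Real.cosh_eq]
    have : Real.exp (-t) ≤ Real.exp t := Real.exp_le_exp.2 (by linarith)
    linarith
  have h2 : Real.exp t / 2 ≤ Real.cosh t := by
    rw [Real.cosh_eq]
    have := Real.exp_pos (-t)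
    linarith
  constructor
  · have := Real.log_le_log (by positivity) h2
    rwa [Real.log_div (Real.exp_pos t).ne' (by norm_num), Real.log_exp] at this
  · have := Real.log_le_log (Real.cosh_pos t) h1
    rwa [Real.log_exp] at this

/-- The integrand. -/
noncomputable def fT (t : ℝ) : ℝ := Real.arsinh |Real.cos t|

lemma fT_cont : Continuous fT := 
  Real.continuous_arsinh.comp (continuous_abs.comp Real.continuous_cos)

lemma fT_nonneg (t : ℝ) : 0 ≤ fT t := Real.arsinh_nonneg_iff.2 (abs_nonneg _)

lemma fT_zero_le : fT 0 ≤ 1 := by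
  unfold fT
  have h : (1 : ℝ) ≤ Real.sinh 1 := Real.self_le_sinh_iff.2 (by norm_num)
  have := Real.arsinh_le_arsinh.2 h
  rw [Real.arsinh_sinh] at this
  simpa using this

lemma fT_lip (x y : ℝ) : |fT x - fT y| ≤ |x - y| := by
  have h1 : LipschitzWith 1 Real.arsinh := by
    apply lipschitzWith_of_nnnorm_deriv_le Real.differentiable_arsinh
    intro x
    rw [(Real.hasDerivAt_arsinh x).deriv, ← NNReal.coe_le_coe, coe_nnnorm, Real.norm_eq_abs,
      abs_of_nonneg (by positivity)]
    apply inv_le_one_of_one_le₀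
    rw [Real.one_le_sqrt]
    nlinarith [sq_nonneg x]
  have h2 : LipschitzWith 1 Real.cos := by
    apply lipschitzWith_of_nnnorm_deriv_le Real.differentiable_cos
    intro x
    rw [Real.deriv_cos, ← NNReal.coe_le_coe, coe_nnnorm, Real.norm_eq_abs, abs_neg]
    exact Real.abs_sin_le_one x
  have h3 := h1.dist_le_mul |Real.cos x| |Real.cos y|
  have h4 := h2.dist_le_mul x y
  simp only [Real.dist_eq, NNReal.coe_one, one_mul] at h3 h4
  exact h3.trans ((abs_abs_sub_abs_le _ _).trans h4)

lemma riemann (m : ℕ) :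
    |∑ j : Fin m, fT (ang m j) - (m + 1) / Real.pi * ∫ t in (0 : ℝ)..Real.pi, fT t|
      ≤ Real.pi + 1 := by
  set h : ℝ := Real.pi / (m + 1) with hh
  have hpi := Real.pi_pos
  have hpos : 0 < h := by positivity
  have hm : (0 : ℝ) < m + 1 := by positivity
  have hfint : ∀ a b : ℝ, IntervalIntegrable fT MeasureTheory.volume a b :=
    fun a b => fT_cont.intervalIntegrable a b
  have hsum : ∑ k ∈ Finset.range (m + 1), ∫ t in ((k : ℕ) * h)..((k + 1 : ℕ) * h), fT t
      = ∫ t in (0 : ℝ)..Real.pi, fT t := by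
    rw [intervalIntegral.sum_integral_adjacent_intervals (a := fun k : ℕ => (k : ℝ) * h)
      (fun k _ => hfint _ _)]
    congr 1
    · simp
    · rw [hh]; push_cast; field_simp
  have hone : ∀ k : ℕ, |(∫ t in ((k : ℕ) * h)..((k + 1 : ℕ) * h), fT t) - h * fT (k * h)|
      ≤ h * h := by
    intro k
    have e : (∫ t in ((k : ℕ) * h)..((k + 1 : ℕ) * h), fT t) - h * fT (k * h) =
        ∫ t in ((k : ℕ) * h)..((k + 1 : ℕ) * h), (fT t - fT (k * h)) := by
      rw [intervalIntegral.integral_sub (hfint _ _) (by simp)]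
      rw [intervalIntegral.integral_const, smul_eq_mul]
      push_cast; ring
    rw [e]
    have := intervalIntegral.norm_integral_le_of_norm_le_const (C := h)
      (f := fun t => fT t - fT (k * h)) (a := (k : ℕ) * h) (b := (k + 1 : ℕ) * h) ?_
    · rw [Real.norm_eq_abs] at this
      refine this.trans ?_
      push_cast
      rw [show ((k : ℝ) + 1) * h - k * h = h by ring, abs_of_pos hpos]
    · intro x hx
      rw [Set.uIoc_of_le (by push_cast; nlinarith)] at hx
      rw [Real.norm_eq_abs]
      refine (fT_lip _ _).trans ?_
      have h1 := hx.1
      have h2 := hx.2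
      push_cast at h2
      rw [abs_of_nonneg (by linarith)]
      linarith
  have hall : |(∫ t in (0 : ℝ)..Real.pi, fT t) - ∑ k ∈ Finset.range (m + 1), h * fT (k * h)|
      ≤ (m + 1) * (h * h) := by
    rw [← hsum, ← Finset.sum_sub_distrib]
    refine (Finset.abs_sum_le_sum_abs _ _).trans ?_
    refine (Finset.sum_le_sum fun k _ => hone k).trans ?_
    simp
  rw [Finset.sum_range_succ'] at hall
  have hS : ∑ k ∈ Finset.range m, h * fT ((k + 1 : ℕ) * h) = h * ∑ j : Fin m, fT (ang m j) := by
    rw [Fin.sum_univ_eq_sum_range (fun j => fT (ang m j)) m, Finset.mul_sum]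
    refine Finset.sum_congr rfl fun k _ => ?_
    congr 2
    rw [hh, ang]; push_cast; ring
  rw [hS] at hall
  set S := ∑ j : Fin m, fT (ang m j)
  set I := ∫ t in (0 : ℝ)..Real.pi, fT t
  have hmh : ((m : ℝ) + 1) / Real.pi = 1 / h := by rw [hh]; field_simp
  have hmh2 : ((m : ℝ) + 1) * (h * h) = Real.pi * h := by rw [hh]; field_simp
  rw [hmh2] at hall
  rw [hmh]
  simp only [Nat.cast_zero, zero_mul] at hall
  have f0 := fT_nonneg 0
  have f1 := fT_zero_le
  have hI : I = h * (1 / h * I) := by field_simp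
  rw [hI] at hall
  have : h * (1 / h * I) - (h * S + h * fT 0) = h * (1 / h * I - S - fT 0) := by ring
  rw [this, abs_mul, abs_of_pos hpos, mul_comm Real.pi] at hall
  have h5 := le_of_mul_le_mul_left hall hpos
  rw [abs_le] at h5 ⊢
  constructor <;> linarith [h5.1, h5.2]

lemma arsinh_integral (c : ℝ) :
    ∫ a in (0 : ℝ)..1, c / √(1 + a ^ 2 * c ^ 2) = Real.arsinh c := by
  have hd : ∀ a ∈ Set.uIcc (0 : ℝ) 1,
      HasDerivAt (fun a => Real.arsinh (a * c)) (c / √(1 + a ^ 2 * c ^ 2)) a := by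
    intro a _
    have := ((hasDerivAt_id a).mul_const c).arsinh
    simp only [id, one_mul, smul_eq_mul, mul_pow] at this
    convert this using 1
    rw [div_eq_inv_mul]
  have hpos : ∀ a : ℝ, √(1 + a ^ 2 * c ^ 2) ≠ 0 := fun a => by positivity
  rw [intervalIntegral.integral_eq_sub_of_hasDerivAt hd]
  · simp
  · apply Continuous.intervalIntegrable
    fun_prop (disch := assumption)

lemma inner_integral {a : ℝ} (ha : 0 < a) :
    ∫ t in (0 : ℝ)..(Real.pi / 2), Real.cos t / √(1 + a ^ 2 * Real.cos t ^ 2) =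
      Real.arctan a / a := by
  have hs : 0 < √(1 + a ^ 2) := by positivity
  have hss : √(1 + a ^ 2) ^ 2 = 1 + a ^ 2 := Real.sq_sqrt (by positivity)
  have hpos : ∀ t : ℝ, √(1 + a ^ 2 * Real.cos t ^ 2) ≠ 0 := fun t => by positivity
  have hd : ∀ t ∈ Set.uIcc (0 : ℝ) (Real.pi / 2),
      HasDerivAt (fun t => Real.arcsin (a * Real.sin t / √(1 + a ^ 2)) / a)
        (Real.cos t / √(1 + a ^ 2 * Real.cos t ^ 2)) t := by
    intro t _
    have hlt : |a * Real.sin t / √(1 + a ^ 2)| < 1 := by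
      rw [← sq_lt_one_iff_abs_lt_one, div_pow, hss, div_lt_one (by positivity)]
      nlinarith [Real.sin_sq_add_cos_sq t, sq_nonneg (a * Real.cos t), sq_nonneg a]
    rw [abs_lt] at hlt
    have h1 := (((Real.hasDerivAt_sin t).const_mul a).div_const (√(1 + a ^ 2)))
    have h2 := ((Real.hasDerivAt_arcsin hlt.1.ne' hlt.2.ne).comp t h1).div_const a
    refine h2.congr_deriv ?_
    have h3 : 1 - (a * Real.sin t / √(1 + a ^ 2)) ^ 2 =
        (1 + a ^ 2 * Real.cos t ^ 2) / (1 + a ^ 2) := by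
      rw [div_pow, hss]
      field_simp
      nlinarith [Real.sin_sq_add_cos_sq t]
    rw [h3, Real.sqrt_div (by positivity)]
    have := hpos t
    field_simp
  rw [intervalIntegral.integral_eq_sub_of_hasDerivAt hd]
  · simp [Real.arctan_eq_arcsin]
  · apply Continuous.intervalIntegrable
    fun_prop (disch := assumption)

lemma arctan_integral :
    ∫ a in (0 : ℝ)..1, Real.arctan a / a = catalanConstant := by
  set F : ℕ → ℝ → ℝ := fun k a => (-1) ^ k / (2 * k + 1) * a ^ (2 * k) with hF
  have hI : ∀ (k : ℕ) (c : ℝ), ∫ a in Set.Ioo (0 : ℝ) 1, c / (2 * k + 1) * a ^ (2 * k) =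
      c / (2 * k + 1) ^ 2 := by
    intro k c
    rw [← MeasureTheory.integral_Ioc_eq_integral_Ioo,
      ← intervalIntegral.integral_of_le zero_le_one, intervalIntegral.integral_const_mul,
      integral_pow]
    have : (2 * (k : ℝ) + 1) ≠ 0 := by positivity
    simp
    field_simp
  have hfint : ∀ k, MeasureTheory.Integrable (F k)
      (MeasureTheory.volume.restrict (Set.Ioo (0 : ℝ) 1)) := by
    intro k
    have : Continuous (F k) := by simp only [hF]; fun_prop
    exact (this.integrableOn_Icc (a := 0) (b := 1)).mono_set Set.Ioo_subset_Icc_self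
  have hnorm : ∀ k, ∫ a in Set.Ioo (0 : ℝ) 1, ‖F k a‖ = 1 / (2 * k + 1) ^ 2 := by
    intro k
    rw [← hI k 1]
    refine MeasureTheory.setIntegral_congr_fun measurableSet_Ioo fun a ha => ?_
    have h0 : (0 : ℝ) ≤ 2 * k + 1 := by positivity
    simp only [hF, norm_mul, norm_div, norm_pow, norm_neg, norm_one, one_pow, Real.norm_eq_abs,
      abs_of_nonneg h0, abs_of_pos ha.1]
  have hsummable : Summable fun k : ℕ => 1 / (2 * (k : ℝ) + 1) ^ 2 := by
    have h1 : Summable fun k : ℕ => 1 / ((k : ℝ)) ^ 2 :=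
      Real.summable_one_div_nat_pow.2 (by norm_num)
    have h2 := h1.comp_injective (i := fun k : ℕ => 2 * k + 1) (fun a b h => by simpa using h)
    refine h2.congr fun k => ?_
    simp
  have hmain := MeasureTheory.integral_tsum_of_summable_integral_norm hfint (by simpa only [hnorm])
  have hL : ∀ k, ∫ a in Set.Ioo (0 : ℝ) 1, F k a = (-1) ^ k / (2 * k + 1) ^ 2 := fun k => hI k _
  simp only [hL] at hmain
  rw [catalanConstant, hmain, intervalIntegral.integral_of_le zero_le_one,
    MeasureTheory.integral_Ioc_eq_integral_Ioo]
  refine MeasureTheory.setIntegral_congr_fun measurableSet_Ioo fun a ha => ?_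
  have h1 := (Real.hasSum_arctan (x := a)
    (by rw [Real.norm_eq_abs, abs_of_pos ha.1]; exact ha.2)).div_const a
  have h2 := h1.tsum_eq
  rw [← h2]
  refine tsum_congr fun k => ?_
  have := ha.1.ne'
  simp only [hF]
  push_cast
  field_simp
  ring

lemma fT_integral : ∫ t in (0 : ℝ)..Real.pi, fT t = 2 * catalanConstant := by
  have hfint : ∀ a b : ℝ, IntervalIntegrable fT MeasureTheory.volume a b :=
    fun a b => fT_cont.intervalIntegrable a b
  have hpi := Real.pi_pos
  rw [← intervalIntegral.integral_add_adjacent_intervals (hfint 0 (Real.pi / 2)) (hfint _ _)]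
  have h1 : ∫ t in (Real.pi / 2)..Real.pi, fT t = ∫ t in (0 : ℝ)..(Real.pi / 2), fT t := by
    have := intervalIntegral.integral_comp_sub_left fT Real.pi (a := 0) (b := Real.pi / 2)
    rw [sub_zero, show Real.pi - Real.pi / 2 = Real.pi / 2 by ring] at this
    rw [← this]
    refine intervalIntegral.integral_congr fun t _ => ?_
    simp [fT]
  have h2 : ∫ t in (0 : ℝ)..(Real.pi / 2), fT t = catalanConstant := by
    have e1 : ∫ t in (0 : ℝ)..(Real.pi / 2), fT t =
        ∫ t in (0 : ℝ)..(Real.pi / 2), ∫ a in (0 : ℝ)..1,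
          Real.cos t / √(1 + a ^ 2 * Real.cos t ^ 2) := by
      refine intervalIntegral.integral_congr fun t ht => ?_
      rw [Set.uIcc_of_le (by positivity)] at ht
      simp only [arsinh_integral]
      rw [fT, abs_of_nonneg (Real.cos_nonneg_of_mem_Icc ⟨by linarith [ht.1], ht.2⟩)]
    rw [e1, MeasureTheory.intervalIntegral_intervalIntegral_swap, ← arctan_integral]
    · refine intervalIntegral.integral_congr_ae (Filter.Eventually.of_forall fun a ha => ?_)
      rw [Set.uIoc_of_le zero_le_one] at ha
      exact inner_integral ha.1
    · have hpos : ∀ p : ℝ × ℝ, √(1 + p.2 ^ 2 * Real.cos p.1 ^ 2) ≠ 0 := fun p => by positivity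
      have hc : Continuous (Function.uncurry fun t a : ℝ =>
          Real.cos t / √(1 + a ^ 2 * Real.cos t ^ 2)) := by
        simp only [Function.uncurry_def]
        fun_prop (disch := assumption)
      refine (hc.continuousOn.integrableOn_compact
        (isCompact_uIcc.prod isCompact_uIcc)).mono_set
          (Set.prod_mono Set.uIoc_subset_uIcc Set.uIoc_subset_uIcc)
  rw [h1, h2]; ring

lemma log_numPM_even {m n : ℕ} (hn : Even n) :
    |Real.log (numPerfectMatchings (gridGraph m n)) - n / 2 * ∑ j : Fin m, fT (ang m j)|
      ≤ m / 2 * Real.log 2 := by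
  have hprod : (numPerfectMatchings (gridGraph m n) : ℝ) ^ 4 =
      ∏ j : Fin m, (Real.cosh ((n + 1) * fT (ang m j)) / Real.cosh (fT (ang m j))) ^ 2 := by
    rw [numPM_prod hn]
    refine Finset.prod_congr rfl fun j _ => ?_
    rw [← cheb_prod hn]
    refine Finset.prod_congr rfl fun k _ => ?_
    rw [fT, Real.sinh_arsinh, sq_abs]
  have hlog := congrArg Real.log hprod
  rw [Real.log_pow, Real.log_prod (fun j _ => by positivity)] at hlog
  have hterm : ∀ j : Fin m,
      |Real.log ((Real.cosh ((n + 1) * fT (ang m j)) / Real.cosh (fT (ang m j))) ^ 2)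
        - 2 * n * fT (ang m j)| ≤ 2 * Real.log 2 := by
    intro j
    have h0 := fT_nonneg (ang m j)
    set a := fT (ang m j)
    have h1 := log_cosh_bounds h0
    have h2 := log_cosh_bounds (t := (n + 1) * a) (by positivity)
    rw [Real.log_pow, Real.log_div (Real.cosh_pos _).ne' (Real.cosh_pos _).ne', abs_le]
    push_cast
    constructor <;> nlinarith [h1.1, h1.2, h2.1, h2.2]
  have hs : |∑ j : Fin m,
      (Real.log ((Real.cosh ((n + 1) * fT (ang m j)) / Real.cosh (fT (ang m j))) ^ 2)
        - 2 * n * fT (ang m j))| ≤ m * (2 * Real.log 2) := by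
    refine (Finset.abs_sum_le_sum_abs _ _).trans ?_
    refine (Finset.sum_le_sum fun j _ => hterm j).trans ?_
    simp
  rw [Finset.sum_sub_distrib, ← hlog, ← Finset.mul_sum] at hs
  push_cast at hs
  rw [abs_le] at hs ⊢
  constructor <;> linarith [hs.1, hs.2]

lemma bound_even {m n : ℕ} (hn : Even n) :
    |Real.log (numPerfectMatchings (gridGraph m n)) - catalanConstant * m * n / Real.pi|
      ≤ (10 + |catalanConstant|) * (m + n) := by
  have h1 := log_numPM_even (m := m) hn
  have h2 := riemann m
  rw [fT_integral] at h2
  set S := ∑ j : Fin m, fT (ang m j)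
  set l := Real.log (numPerfectMatchings (gridGraph m n))
  have hpi := Real.pi_pos
  have hpi3 := Real.pi_gt_three
  have hpi4 := Real.pi_le_four
  have hlog : Real.log 2 ≤ 1 := by
    have := Real.log_le_sub_one_of_pos (x := 2) (by norm_num)
    linarith
  have hlog0 : 0 ≤ Real.log 2 := Real.log_nonneg (by norm_num)
  have hm : (0 : ℝ) ≤ m := by positivity
  have hn0 : (0 : ℝ) ≤ n := by positivity
  have e : l - catalanConstant * m * n / Real.pi = (l - n / 2 * S)
      + n / 2 * (S - (m + 1) / Real.pi * (2 * catalanConstant))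
      + n * (catalanConstant / Real.pi) := by
    field_simp
    ring
  have h3 : |n / 2 * (S - (m + 1) / Real.pi * (2 * catalanConstant))| ≤ n / 2 * 5 := by
    rw [abs_mul, abs_of_nonneg (by positivity : (0 : ℝ) ≤ n / 2)]
    apply mul_le_mul_of_nonneg_left _ (by positivity)
    linarith
  have h4 : |n * (catalanConstant / Real.pi)| ≤ n * |catalanConstant| := by
    rw [abs_mul, abs_of_nonneg hn0, abs_div, abs_of_pos hpi]
    apply mul_le_mul_of_nonneg_left _ hn0
    apply div_le_self (abs_nonneg _)
    linarith
  have h5 : (m : ℝ) / 2 * Real.log 2 ≤ m / 2 * 1 :=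
    mul_le_mul_of_nonneg_left hlog (by positivity)
  have h6 : 0 ≤ m * |catalanConstant| := by positivity
  rw [e]
  refine (abs_add_three _ _ _).trans ?_
  nlinarith

lemma numPM_le_of_iso {V W : Type*} [Finite W] {G : SimpleGraph V} {H : SimpleGraph W}
    (f : G ≃g H) : numPerfectMatchings G ≤ numPerfectMatchings H := by
  classical
  have : Fintype W := Fintype.ofFinite W
  unfold numPerfectMatchings
  have key : ∀ M : Finset (Sym2 V), IsPerfectMatchingSet G M →
      IsPerfectMatchingSet H (M.map ⟨Sym2.map f, Sym2.map.injective f.injective⟩) := by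
    rintro M ⟨hM1, hM2⟩
    refine ⟨?_, fun w => ?_⟩
    · intro e he
      rw [Finset.mem_map] at he
      obtain ⟨e', he', rfl⟩ := he
      have := hM1 e' he'
      induction e' using Sym2.ind with
      | _ x y =>
        simp only [SimpleGraph.mem_edgeSet] at this
        exact f.map_rel_iff.2 this
    · obtain ⟨e, ⟨he1, he2⟩, hu⟩ := hM2 (f.symm w)
      refine ⟨Sym2.map f e, ⟨?_, ?_⟩, ?_⟩
      · exact Finset.mem_map_of_mem _ he1
      · exact Sym2.mem_map.2 ⟨_, he2, by simp⟩
      · rintro e' ⟨he', hw⟩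
        rw [Finset.mem_map] at he'
        obtain ⟨e'', he'', rfl⟩ := he'
        obtain ⟨v, hv, hvw⟩ := Sym2.mem_map.1 hw
        have : v = f.symm w := by rw [← hvw]; simp
        rw [← hu e'' ⟨he'', this ▸ hv⟩]
        rfl
  refine Nat.card_le_card_of_injective
    (fun M : {M : Finset (Sym2 V) // IsPerfectMatchingSet G M} =>
      (⟨_, key M.1 M.2⟩ : {M : Finset (Sym2 W) // IsPerfectMatchingSet H M})) ?_
  intro M M' h
  have := congrArg Subtype.val h
  exact Subtype.ext (Finset.map_injective _ this)

/-- Transposition of the grid. -/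
def gridSwap (m n : ℕ) : gridGraph m n ≃g gridGraph n m where
  toEquiv := Equiv.prodComm _ _
  map_rel_iff' := by
    rintro ⟨a, b⟩ ⟨c, d⟩
    simp only [gridGraph, SimpleGraph.fromRel_adj, Equiv.prodComm_apply, Prod.swap, ne_eq,
      Prod.mk.injEq]
    tauto

lemma numPM_swap (m n : ℕ) :
    numPerfectMatchings (gridGraph m n) = numPerfectMatchings (gridGraph n m) :=
  le_antisymm (numPM_le_of_iso (gridSwap m n)) (numPM_le_of_iso (gridSwap n m))

/-- The number of domino tilings of an m×n rectangle is exp(Gmn/π + O(m+n)),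
where G is Catalan's constant: there is a constant C > 0 such that for all m, n ≥ 1
with mn even, |log N(m,n) - Gmn/π| ≤ C(m+n). -/
theorem log_numPerfectMatchings_rect :
    ∃ C : ℝ, 0 < C ∧ ∀ m n : ℕ, 0 < m → 0 < n → Even (m * n) →
      |Real.log (numPerfectMatchings (gridGraph m n)) -
        catalanConstant * m * n / Real.pi| ≤ C * (m + n) := by
  refine ⟨10 + |catalanConstant|, by positivity, fun m n _ _ hmn => ?_⟩
  rcases Nat.even_mul.1 hmn with h | h
  · have := bound_even (m := n) h
    rw [numPM_swap]
    convert this using 2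
    · congr 2; ring
    · ring
  · exact bound_even h
end
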